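/- Let s be a finite index set, let g_j be a real number for each j ∈ s, let c be a real number, and let M_j ≥ 0 be real weights with ∑_{j∈s} M_j ≤ 1. Then the per-sample RSPO chain of inequalities holds: ∑_{j∈s} M_j · 𝕀(c < g_j) ≤ ∑_{j∈s} M_j · log₂(1 + exp(g_j − c)) ≤ log₂(1 + ∑_{j∈s} M_j · exp(g_j − c)), where 𝕀(c < g_j) equals 1 if c < g_j and 0 otherwise. -/

import Mathlib

/-!
The logistic loss `log₂ (1 + exp x)` is at least `1` exactly when `0 ≤ x`, so it dominates the
indicator of `0 < x`. As a function of `y = exp x`, it is concave and vanishes at `y = 0`; putting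
the missing mass `1 - ∑ j ∈ s, M j` at `y = 0` therefore costs nothing and reduces the second
inequality to Jensen's.
-/

theorem concaveOn_le_map_sum_of_sum_le_one {𝕜 E β ι : Type*} [Field 𝕜] [LinearOrder 𝕜]
    [IsStrictOrderedRing 𝕜] [AddCommGroup E] [Module 𝕜 E] [AddCommGroup β] [PartialOrder β]
    [IsOrderedAddMonoid β] [Module 𝕜 β] [IsStrictOrderedModule 𝕜 β] {f : E → β} {S : Set E}
    {t : Finset ι} {w : ι → 𝕜} {p : ι → E} (hf : ConcaveOn 𝕜 S f) (hS : 0 ∈ S) (hf₀ : 0 ≤ f 0)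
    (hw : ∀ i ∈ t, 0 ≤ w i) (hw₁ : ∑ i ∈ t, w i ≤ 1) (hp : ∀ i ∈ t, p i ∈ S) :
    ∑ i ∈ t, w i • f (p i) ≤ f (∑ i ∈ t, w i • p i) := by
  have hdefect : 0 ≤ 1 - ∑ i ∈ t, w i := sub_nonneg.2 hw₁
  calc
    ∑ i ∈ t, w i • f (p i)
      ≤ (1 - ∑ i ∈ t, w i) • f 0 + ∑ i ∈ t, w i • f (p i) :=
        le_add_of_nonneg_left (smul_nonneg hdefect hf₀)
    _ ≤ f ((1 - ∑ i ∈ t, w i) • 0 + ∑ i ∈ t, w i • p i) :=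
        hf.map_add_sum_le hw (sub_add_cancel _ _) hp hdefect hS
    _ = f (∑ i ∈ t, w i • p i) := by rw [smul_zero, zero_add]

theorem concaveOn_logb_one_add {b : ℝ} (hb : 1 < b) :
    ConcaveOn ℝ (Set.Ioi (-1)) fun x ↦ Real.logb b (1 + x) := by
  have hlog : ConcaveOn ℝ (Set.Ioi (-1)) fun x : ℝ ↦ Real.log (1 + x) := by
    simpa only [Function.comp_def, Set.preimage_const_add_Ioi, zero_sub] using!
      strictConcaveOn_log_Ioi.concaveOn.translate_right 1
  simpa only [Real.logb, div_eq_inv_mul, smul_eq_mul] using!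
    hlog.smul (inv_nonneg.2 (Real.log_pos hb).le)

theorem sum_mul_logb_one_add_le {ι : Type*} {b : ℝ} (hb : 1 < b) {s : Finset ι} {w x : ι → ℝ}
    (hw : ∀ j ∈ s, 0 ≤ w j) (hw₁ : ∑ j ∈ s, w j ≤ 1) (hx : ∀ j ∈ s, -1 < x j) :
    ∑ j ∈ s, w j * Real.logb b (1 + x j) ≤ Real.logb b (1 + ∑ j ∈ s, w j * x j) :=
  concaveOn_le_map_sum_of_sum_le_one (concaveOn_logb_one_add hb) (by norm_num) (by simp) hw hw₁ hx

theorem one_le_logb_two_one_add_exp_iff {x : ℝ} :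
    1 ≤ Real.logb 2 (1 + Real.exp x) ↔ 0 ≤ x := by
  rw [Real.le_logb_iff_rpow_le one_lt_two (by positivity), Real.rpow_one, ← one_add_one_eq_two,
    add_le_add_iff_left, Real.one_le_exp_iff]

theorem ite_pos_le_logb_two_one_add_exp (x : ℝ) :
    (if 0 < x then (1 : ℝ) else 0) ≤ Real.logb 2 (1 + Real.exp x) := by
  split_ifs with hx
  · exact one_le_logb_two_one_add_exp_iff.2 hx.le
  · exact Real.logb_nonneg one_lt_two (le_add_of_nonneg_right (Real.exp_pos x).le)

/-- Per-sample RSPO chain of inequalities: for a finite index set `s`, scores `g j`, a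
threshold `c`, and nonnegative weights `M j` with `∑ j ∈ s, M j ≤ 1`,
`∑ j ∈ s, M j * 𝕀(c < g j) ≤ ∑ j ∈ s, M j * log₂ (1 + exp (g j − c))
  ≤ log₂ (1 + ∑ j ∈ s, M j * exp (g j − c))`. -/
theorem rspo_per_sample_chain {ι : Type*} (s : Finset ι) (g : ι → ℝ) (c : ℝ) (M : ι → ℝ)
    (hM : ∀ j ∈ s, 0 ≤ M j) (hMsum : ∑ j ∈ s, M j ≤ 1) :
    (∑ j ∈ s, M j * (if c < g j then (1 : ℝ) else 0)) ≤
        ∑ j ∈ s, M j * Real.logb 2 (1 + Real.exp (g j - c)) ∧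
    (∑ j ∈ s, M j * Real.logb 2 (1 + Real.exp (g j - c))) ≤
        Real.logb 2 (1 + ∑ j ∈ s, M j * Real.exp (g j - c)) := by
  constructor
  · have hsurrogate (j : ι) :
        (if c < g j then (1 : ℝ) else 0) ≤ Real.logb 2 (1 + Real.exp (g j - c)) := by
      simpa only [sub_pos] using ite_pos_le_logb_two_one_add_exp (g j - c)
    exact Finset.sum_le_sum fun j hj ↦ mul_le_mul_of_nonneg_left (hsurrogate j) (hM j hj)
  · exact sum_mul_logb_one_add_le one_lt_two hM hMsum fun j _ ↦
      neg_one_lt_zero.trans (Real.exp_pos (g j - c))
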